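/- arXiv:2102.11049 — 3 statements merged into one kernel-verified Lean document; each statement's English description precedes it below -/
import Mathlib

section
/- Assume the coordinate ordering condition. There exists a constant K > 0, depending only on d, the index sets, and the ratios λ, such that for every δ ∈ (0,1), every 1 ≤ n ≤ d, and every i ∈ Σ whose type P = τ_δ(i) is defined (i.e. L_δ(i,n+1) < L_δ(i,n) for all 1 ≤ n ≤ d), one has |(L_δ(i,n) − L_δ(i,n+1)) − C_n^{(d)}(P)·(−log δ)| ≤ K. -/
open Real Finset Filter

noncomputable section

/-- Index sets of a Gatzouras–Lalley structure. -/
def glIdx (Nf : List ℕ → ℕ) : ℕ → Finset (List ℕ)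
  | 0 => {[]}
  | n + 1 => (glIdx Nf n).biUnion fun u =>
      (Finset.range (Nf u)).image fun j => u ++ [j + 1]

/-- Entropy of a vector `p` on index set `I`. -/
def glEnt (I : Finset (List ℕ)) (p : List ℕ → ℝ) : ℝ :=
  -∑ i ∈ I, p i * Real.log (p i)

/-- Lyapunov exponent `χ_ℓ(p)` for `p` on index set `I`. -/
def glLyap (lam : List ℕ → ℝ) (I : Finset (List ℕ)) (ℓ : ℕ) (p : List ℕ → ℝ) : ℝ :=
  -∑ i ∈ I, p i * Real.log (lam (i.take ℓ))

def IsProbVec (I : Finset (List ℕ)) (p : List ℕ → ℝ) : Prop :=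
  (∀ i ∈ I, 0 ≤ p i) ∧ ∑ i ∈ I, p i = 1

/-- `glCaux d χ k = C^{(d)}_{d-k}`, defined by downward recursion. -/
def glCaux (d : ℕ) (chi : ℕ → ℕ → ℝ) : ℕ → ℝ
  | k => (1 - ∑ j ∈ (Finset.range k).attach,
        glCaux d chi j.1 * chi (d - k) (d - j.1)) / chi (d - k) (d - k)
decreasing_by exact Finset.mem_range.mp j.2

/-- The coefficient `C_n^{(d)}(P)`. -/
def glC (d : ℕ) (lam : List ℕ → ℝ) (Nf : List ℕ → ℕ) (P : ℕ → List ℕ → ℝ) (n : ℕ) : ℝ :=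
  glCaux d (fun a m => glLyap lam (glIdx Nf m) a (P m)) (d - n)

/-- Smallest number of sets of diameter at most `δ` needed to cover `Λ`. -/
def coverNum {E : Type*} [EMetricSpace E] (Λ : Set E) (δ : ℝ) : ℕ :=
  sInf {m : ℕ | ∃ U : Fin m → Set E,
    (∀ k, EMetric.diam (U k) ≤ ENNReal.ofReal δ) ∧ Λ ⊆ ⋃ k, U k}

/-- The affine map `S_i` of a Gatzouras–Lalley system. -/
def glMap (d : ℕ) (lam t : List ℕ → ℝ) (i : List ℕ) (x : EuclideanSpace ℝ (Fin d)) :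
    EuclideanSpace ℝ (Fin d) :=
  WithLp.toLp 2 fun k => lam (i.take ((k : ℕ) + 1)) * x k + t (i.take ((k : ℕ) + 1))

def openCube (d : ℕ) : Set (EuclideanSpace ℝ (Fin d)) := {x | ∀ k, x k ∈ Set.Ioo (0:ℝ) 1}

def closedCube (d : ℕ) : Set (EuclideanSpace ℝ (Fin d)) := {x | ∀ k, x k ∈ Set.Icc (0:ℝ) 1}


/-- Empirical distribution of the words `(i_ℓ)^{(n)}` for `a < ℓ ≤ b`. -/
def empDist (iseq : ℕ → List ℕ) (a b n : ℕ) (u : List ℕ) : ℝ :=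
  (((Finset.Icc (a + 1) b).filter fun ℓ => (iseq ℓ).take n = u).card : ℝ) / ((b : ℝ) - a)

lemma aux_length (Nf : List ℕ → ℕ) : ∀ n, ∀ i ∈ glIdx Nf n, i.length = n := by
  intro n
  induction n with
  | zero => intro i hi; simp [glIdx] at hi; simp [hi]
  | succ n ih =>
    intro i hi
    simp only [glIdx, Finset.mem_biUnion, Finset.mem_image] at hi
    obtain ⟨u, hu, j, -, rfl⟩ := hi
    simp [ih u hu]

lemma aux_take (Nf : List ℕ → ℕ) (n : ℕ) : ∀ d, n ≤ d → ∀ i ∈ glIdx Nf d, i.take n ∈ glIdx Nf n := by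
  intro d hd
  induction d, hd using Nat.le_induction with
  | base =>
    intro i hi
    rwa [List.take_of_length_le (aux_length Nf n i hi).le]
  | succ d hd ih =>
    intro i hi
    simp only [glIdx, Finset.mem_biUnion, Finset.mem_image] at hi
    obtain ⟨u, hu, j, -, rfl⟩ := hi
    rw [List.take_append_of_le_length (by rw [aux_length Nf d u hu]; exact hd)]
    exact ih u hu

lemma aux_bounds {α : Type*} (s : Finset α) (f : α → ℝ) (hf : ∀ x ∈ s, 0 < f x) :
    ∃ c D : ℝ, 0 < c ∧ 0 < D ∧ ∀ x ∈ s, c ≤ f x ∧ f x ≤ D := by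
  classical
  induction s using Finset.induction_on with
  | empty => exact ⟨1, 1, one_pos, one_pos, by simp⟩
  | insert a s ha ih =>
    obtain ⟨c, D, hc, hD, h⟩ := ih (fun x hx => hf x (Finset.mem_insert_of_mem hx))
    have ha' := hf a (Finset.mem_insert_self a s)
    refine ⟨min c (f a), max D (f a), lt_min hc ha', lt_max_of_lt_left hD, ?_⟩
    intro x hx
    rcases Finset.mem_insert.mp hx with rfl | hx
    · exact ⟨min_le_right _ _, le_max_right _ _⟩
    · exact ⟨(min_le_left _ _).trans (h x hx).1, (h x hx).2.trans (le_max_left _ _)⟩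

lemma aux_lyap (lam : List ℕ → ℝ) (I : Finset (List ℕ)) (iseq : ℕ → List ℕ) (a b m n : ℕ)
    (hab : a < b) (hnm : n ≤ m)
    (hI : ∀ ℓ ∈ Finset.Icc (a + 1) b, (iseq ℓ).take m ∈ I) :
    ((b : ℝ) - a) * glLyap lam I n (empDist iseq a b m) =
      ∑ ℓ ∈ Finset.Icc (a + 1) b, -Real.log (lam ((iseq ℓ).take n)) := by
  have hne : (b : ℝ) - a ≠ 0 := by
    have : (a : ℝ) < b := by exact_mod_cast hab
    linarith
  have key := Finset.sum_fiberwise_of_maps_to' hI (fun u => -Real.log (lam (u.take n)))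
  have h2 : ∀ ℓ, ((iseq ℓ).take m).take n = (iseq ℓ).take n := by
    intro ℓ; rw [List.take_take, min_eq_left hnm]
  simp only [h2] at key
  rw [← key, glLyap, ← Finset.sum_neg_distrib, Finset.mul_sum]
  refine Finset.sum_congr rfl fun u _ => ?_
  rw [Finset.sum_const, nsmul_eq_mul, empDist]
  field_simp

lemma aux_tele (f : ℕ → ℝ) (L : ℕ → ℕ) (d : ℕ) (h0 : L (d + 1) = 0)
    (hL : ∀ n, 1 ≤ n → n ≤ d → L (n + 1) < L n) (k : ℕ) (hk : k < d) :
    ∑ j ∈ Finset.range (k + 1), ∑ ℓ ∈ Finset.Icc (L (d - j + 1) + 1) (L (d - j)), f ℓ =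
      ∑ ℓ ∈ Finset.Icc 1 (L (d - k)), f ℓ := by
  induction k with
  | zero => simp [h0]
  | succ k ih =>
    rw [Finset.sum_range_succ, ih (by omega)]
    have e : d - (k + 1) + 1 = d - k := by omega
    have h1 := hL (d - (k + 1)) (by omega) (by omega)
    rw [e] at h1 ⊢
    have hh : ∀ a b : ℕ, Finset.Icc (a + 1) b = Finset.Ioc a b := by
      intro a b; ext x; simp [Nat.succ_le_iff]
    rw [← zero_add 1, hh, hh, hh]
    exact Finset.sum_Ioc_consecutive f (Nat.zero_le _) h1.le

lemma aux_rec (d : ℕ) (chi : ℕ → ℕ → ℝ) (B : ℕ → ℝ) (T c D : ℝ) (hc : 0 < c) (hD : 0 < D)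
    (h1 : ∀ k < d, ∀ j ≤ k, c ≤ chi (d - k) (d - j) ∧ chi (d - k) (d - j) ≤ D)
    (h2 : ∀ k < d, |∑ j ∈ Finset.range (k + 1), B (d - j) * chi (d - k) (d - j) - T| ≤ D)
    (k : ℕ) (hk : k < d) :
    |B (d - k) - glCaux d chi k * T| ≤ D / c * (1 + D / c) ^ k := by
  induction k using Nat.strong_induction_on with
  | _ k ih =>
  have hx := (h1 k hk k le_rfl).1
  have hxp : 0 < chi (d - k) (d - k) := hc.trans_le hx
  have hC : glCaux d chi k * chi (d - k) (d - k) =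
      1 - ∑ j ∈ Finset.range k, glCaux d chi j * chi (d - k) (d - j) := by
    rw [glCaux, div_mul_cancel₀ _ hxp.ne',
      Finset.sum_attach (Finset.range k) (fun j => glCaux d chi j * chi (d - k) (d - j))]
  set E : ℕ → ℝ := fun j => B (d - j) - glCaux d chi j * T with hE
  have hEq : E k * chi (d - k) (d - k) =
      (∑ j ∈ Finset.range (k + 1), B (d - j) * chi (d - k) (d - j) - T) -
        ∑ j ∈ Finset.range k, E j * chi (d - k) (d - j) := by
    have : ∑ j ∈ Finset.range k, E j * chi (d - k) (d - j) =
        ∑ j ∈ Finset.range k, B (d - j) * chi (d - k) (d - j) -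
          (∑ j ∈ Finset.range k, glCaux d chi j * chi (d - k) (d - j)) * T := by
      rw [Finset.sum_mul, ← Finset.sum_sub_distrib]
      refine Finset.sum_congr rfl fun j _ => ?_
      simp only [hE]; ring
    rw [this, Finset.sum_range_succ]
    simp only [hE]
    linear_combination (-T) * hC
  set M := D / c with hM
  have hMp : 0 < M := div_pos hD hc
  have hS : |∑ j ∈ Finset.range k, E j * chi (d - k) (d - j)| ≤
      ∑ j ∈ Finset.range k, M * (1 + M) ^ j * D := by
    refine (Finset.abs_sum_le_sum_abs _ _).trans (Finset.sum_le_sum fun j hj => ?_)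
    have hj' := Finset.mem_range.mp hj
    have hb := h1 k hk j hj'.le
    rw [abs_mul, abs_of_pos (hc.trans_le hb.1)]
    exact mul_le_mul (ih j hj' (by omega)) hb.2 (hc.trans_le hb.1).le (by positivity)
  have hG : ∑ j ∈ Finset.range k, M * (1 + M) ^ j * D = D * ((1 + M) ^ k - 1) := by
    have := geom_sum_mul (1 + M) k
    rw [← Finset.sum_mul, ← Finset.mul_sum]
    linear_combination D * this
  have hfin : |E k| * c ≤ D * (1 + M) ^ k := by
    calc |E k| * c ≤ |E k| * chi (d - k) (d - k) := by gcongr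
      _ = |E k * chi (d - k) (d - k)| := by rw [abs_mul, abs_of_pos hxp]
      _ ≤ D + D * ((1 + M) ^ k - 1) := by
        rw [hEq]
        refine (abs_sub _ _).trans (add_le_add (h2 k hk) (hG ▸ hS))
      _ = _ := by ring
  have : |E k| ≤ D * (1 + M) ^ k / c := (le_div_iff₀ hc).mpr hfin
  calc |E k| ≤ _ := this
    _ = _ := by rw [hM]; ring

/-- Under the coordinate ordering condition, the block lengths
`L_δ(i,n) - L_δ(i,n+1)` of an approximate cube equal `C_n^{(d)}(τ_δ(i))·(-log δ)`
up to a uniformly bounded additive error. -/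
theorem block_length_approx
    (d : ℕ) (hd : 1 ≤ d)
    (Nf : List ℕ → ℕ) (hN : 2 ≤ Nf [])
    (hNf : ∀ n < d, ∀ u ∈ glIdx Nf n, 1 ≤ Nf u)
    (lam : List ℕ → ℝ)
    (hlam : ∀ n, 1 ≤ n → n ≤ d → ∀ i ∈ glIdx Nf n, lam i ∈ Set.Ioo (0:ℝ) 1)
    (horder : ∀ i ∈ glIdx Nf d, ∀ ℓ, 1 ≤ ℓ → ℓ < d →
      lam (i.take (ℓ + 1)) < lam (i.take ℓ)) :
    ∃ K : ℝ, 0 < K ∧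
      ∀ δ : ℝ, δ ∈ Set.Ioo (0:ℝ) 1 →
      ∀ iseq : ℕ → List ℕ, (∀ ℓ, 1 ≤ ℓ → iseq ℓ ∈ glIdx Nf d) →
      ∀ L : ℕ → ℕ,
        -- `L n` is the `δ`-stopping of `iseq` in the `n`-th coordinate
        (∀ n, 1 ≤ n → n ≤ d → 1 ≤ L n ∧
          (∏ ℓ ∈ Finset.Icc 1 (L n), lam ((iseq ℓ).take n)) ≤ δ ∧
          δ < ∏ ℓ ∈ Finset.Icc 1 (L n - 1), lam ((iseq ℓ).take n)) →
        L (d + 1) = 0 →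
        -- the type `τ_δ(iseq)` is defined
        (∀ n, 1 ≤ n → n ≤ d → L (n + 1) < L n) →
        ∀ n, 1 ≤ n → n ≤ d →
          |((L n : ℝ) - (L (n + 1) : ℝ)) -
            glC d lam Nf (fun m => empDist iseq (L (m + 1)) (L m) m) n * (-Real.log δ)|
              ≤ K := by
  obtain ⟨c, D, hc, hD, hb⟩ := aux_bounds ((Finset.Icc 1 d).biUnion (glIdx Nf))
    (fun i => -Real.log (lam i)) (by
      intro x hx
      simp only [Finset.mem_biUnion, Finset.mem_Icc] at hx
      obtain ⟨n, hn, hx⟩ := hx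
      have := hlam n hn.1 hn.2 x hx
      exact neg_pos.mpr (Real.log_neg this.1 this.2))
  refine ⟨D / c * (1 + D / c) ^ d, by positivity, ?_⟩
  intro δ hδ iseq hi L hL h0 hLt n hn1 hnd
  have hlb : ∀ m, 1 ≤ m → m ≤ d → ∀ ℓ, 1 ≤ ℓ →
      c ≤ -Real.log (lam ((iseq ℓ).take m)) ∧ -Real.log (lam ((iseq ℓ).take m)) ≤ D := by
    intro m h1 h2 ℓ hℓ
    exact hb _ (Finset.mem_biUnion.mpr ⟨m, Finset.mem_Icc.mpr ⟨h1, h2⟩,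
      aux_take Nf m d h2 _ (hi ℓ hℓ)⟩)
  have hlp : ∀ m, 1 ≤ m → m ≤ d → ∀ ℓ, 1 ≤ ℓ → 0 < lam ((iseq ℓ).take m) := by
    intro m h1 h2 ℓ hℓ
    exact (hlam m h1 h2 _ (aux_take Nf m d h2 _ (hi ℓ hℓ))).1
  have hly : ∀ m a, 1 ≤ m → m ≤ d → a ≤ m →
      ((L m : ℝ) - L (m + 1)) * glLyap lam (glIdx Nf m) a (empDist iseq (L (m + 1)) (L m) m) =
      ∑ ℓ ∈ Finset.Icc (L (m + 1) + 1) (L m), -Real.log (lam ((iseq ℓ).take a)) := by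
    intro m a h1 h2 h3
    refine aux_lyap lam _ iseq _ _ m a (hLt m h1 h2) h3 fun ℓ hℓ => ?_
    exact aux_take Nf m d h2 _ (hi ℓ (by have := (Finset.mem_Icc.mp hℓ).1; omega))
  have hmain := aux_rec d
    (fun a m => glLyap lam (glIdx Nf m) a (empDist iseq (L (m + 1)) (L m) m))
    (fun m => (L m : ℝ) - L (m + 1)) (-Real.log δ) c D hc hD ?_ ?_ (d - n) (by omega)
  · have e : d - (d - n) = n := by omega
    simp only [e] at hmain
    refine hmain.trans ?_
    have hM : 0 < D / c := div_pos hD hc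
    gcongr
    · linarith
    · omega
  · intro k hk j hj
    have h1 : 1 ≤ d - j := by omega
    have h2 : d - j ≤ d := by omega
    have hy := hly (d - j) (d - k) h1 h2 (by omega)
    have hpos : (0 : ℝ) < (L (d - j) : ℝ) - L (d - j + 1) := by
      have : (L (d - j + 1) : ℝ) < L (d - j) := by exact_mod_cast hLt (d - j) h1 h2
      linarith
    have hcard : ((Finset.Icc (L (d - j + 1) + 1) (L (d - j))).card : ℝ) =
        (L (d - j) : ℝ) - L (d - j + 1) := by
      rw [Nat.card_Icc, Nat.add_sub_add_right, Nat.cast_sub (hLt (d - j) h1 h2).le]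
    have hbd : ∀ ℓ ∈ Finset.Icc (L (d - j + 1) + 1) (L (d - j)),
        c ≤ -Real.log (lam ((iseq ℓ).take (d - k))) ∧
          -Real.log (lam ((iseq ℓ).take (d - k))) ≤ D := fun ℓ hℓ =>
      hlb (d - k) (by omega) (by omega) ℓ (by have := (Finset.mem_Icc.mp hℓ).1; omega)
    have hlo := Finset.card_nsmul_le_sum _ _ _ (fun ℓ hℓ => (hbd ℓ hℓ).1)
    have hhi := Finset.sum_le_card_nsmul _ _ _ (fun ℓ hℓ => (hbd ℓ hℓ).2)
    rw [nsmul_eq_mul, hcard, ← hy] at hlo hhi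
    exact ⟨le_of_mul_le_mul_left hlo hpos, le_of_mul_le_mul_left hhi hpos⟩
  · intro k hk
    have h1 : 1 ≤ d - k := by omega
    have h2 : d - k ≤ d := by omega
    have hs : ∑ j ∈ Finset.range (k + 1), ((L (d - j) : ℝ) - L (d - j + 1)) *
        glLyap lam (glIdx Nf (d - j)) (d - k) (empDist iseq (L (d - j + 1)) (L (d - j)) (d - j)) =
        ∑ ℓ ∈ Finset.Icc 1 (L (d - k)), -Real.log (lam ((iseq ℓ).take (d - k))) := by
      rw [← aux_tele _ L d h0 hLt k hk]
      refine Finset.sum_congr rfl fun j hj => ?_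
      have := Finset.mem_range.mp hj
      exact hly (d - j) (d - k) (by omega) (by omega) (by omega)
    simp only [hs]
    obtain ⟨hL1, hle, hlt⟩ := hL (d - k) h1 h2
    have hlog : ∀ N, Real.log (∏ ℓ ∈ Finset.Icc 1 N, lam ((iseq ℓ).take (d - k))) =
        ∑ ℓ ∈ Finset.Icc 1 N, Real.log (lam ((iseq ℓ).take (d - k))) := fun N =>
      Real.log_prod fun ℓ hℓ => (hlp (d - k) h1 h2 ℓ (Finset.mem_Icc.mp hℓ).1).ne'
    have hpp : ∀ N, 0 < ∏ ℓ ∈ Finset.Icc 1 N, lam ((iseq ℓ).take (d - k)) := fun N =>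
      Finset.prod_pos fun ℓ hℓ => hlp (d - k) h1 h2 ℓ (Finset.mem_Icc.mp hℓ).1
    have a1 := Real.log_le_log (hpp _) hle
    have a2 := Real.log_lt_log hδ.1 hlt
    rw [hlog] at a1 a2
    have a3 := (hlb (d - k) h1 h2 (L (d - k)) hL1).2
    rw [Finset.sum_neg_distrib]
    obtain ⟨q, hq⟩ : ∃ q, L (d - k) = q + 1 := ⟨L (d - k) - 1, by omega⟩
    rw [hq] at a1 a2 a3 ⊢
    rw [Finset.sum_Icc_succ_top (by omega)] at a1 ⊢
    simp only [Nat.add_sub_cancel] at a2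
    rw [abs_le]
    constructor <;> linarith
end
end

section
/- For any GL index structure with contraction ratios λ(i) ∈ (0,1), there exist unique reals s_1, …, s_d satisfying Σ_{i∈I_1} λ(i)^{s_1} = 1 and, for n = 2,…,d, Σ_{i∈I_n} λ(i^{(1)})^{s_1}·Π_{ℓ=2}^n λ(i^{(ℓ)})^{s_ℓ−s_{ℓ−1}} = 1; moreover 0 < s_1 ≤ s_2 ≤ … ≤ s_d. -/
open Real Finset Filter

noncomputable section

lemma gl_anti {A : Finset (List ℕ)} (hA : A.Nonempty) (w a : List ℕ → ℝ)
    (hw : ∀ i ∈ A, 0 < w i) (ha : ∀ i ∈ A, a i ∈ Set.Ioo (0:ℝ) 1) :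
    StrictAnti fun t : ℝ => ∑ i ∈ A, w i * a i ^ t := by
  intro x y hxy
  refine Finset.sum_lt_sum_of_nonempty hA fun i hi => ?_
  exact mul_lt_mul_of_pos_left
    (Real.rpow_lt_rpow_of_exponent_gt (ha i hi).1 (ha i hi).2 hxy) (hw i hi)

lemma gl_root {A : Finset (List ℕ)} (w a : List ℕ → ℝ)
    (ha : ∀ i ∈ A, a i ∈ Set.Ioo (0:ℝ) 1) (h1 : 1 ≤ ∑ i ∈ A, w i) :
    ∃ t : ℝ, 0 ≤ t ∧ ∑ i ∈ A, w i * a i ^ t = 1 := by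
  have hlim : Tendsto (fun t : ℝ => ∑ i ∈ A, w i * a i ^ t) atTop (nhds 0) := by
    have : Tendsto (fun t : ℝ => ∑ i ∈ A, w i * a i ^ t) atTop (nhds (∑ i ∈ A, w i * 0)) := by
      refine tendsto_finsetSum _ fun i hi => ?_
      exact (tendsto_rpow_atTop_of_base_lt_one _ (by linarith [(ha i hi).1]) (ha i hi).2).const_mul _
    simpa using this
  obtain ⟨T, hT0, hT⟩ := ((eventually_ge_atTop (0:ℝ)).and
    (hlim.eventually (gt_mem_nhds (zero_lt_one)))).exists
  have hc : ContinuousOn (fun t : ℝ => ∑ i ∈ A, w i * a i ^ t) (Set.Icc 0 T) := by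
    refine continuousOn_finsetSum _ fun i hi => ?_
    exact (continuous_const.mul
      (Real.continuous_const_rpow (ha i hi).1.ne')).continuousOn
  obtain ⟨t, ht, hft⟩ := intermediate_value_Icc' hT0 hc
    (show (1:ℝ) ∈ Set.Icc _ _ from ⟨hT.le, by simpa using h1⟩)
  exact ⟨t, ht.1, hft⟩

/-- The weight of a word. -/
def glW (lam : List ℕ → ℝ) (s : ℕ → ℝ) (n : ℕ) (i : List ℕ) : ℝ :=
  ∏ ℓ ∈ Finset.Icc 1 n, lam (i.take ℓ) ^ (s ℓ - s (ℓ - 1))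

lemma glIdx_succ {Nf : List ℕ → ℕ} {n : ℕ} {i : List ℕ} :
    i ∈ glIdx Nf (n + 1) ↔ ∃ u ∈ glIdx Nf n, ∃ j < Nf u, u ++ [j + 1] = i := by
  simp [glIdx]

lemma glIdx_length {Nf : List ℕ → ℕ} (n : ℕ) : ∀ i ∈ glIdx Nf n, i.length = n := by
  induction n with
  | zero => simp [glIdx]
  | succ n ih =>
    intro i hi
    obtain ⟨u, hu, j, -, rfl⟩ := glIdx_succ.1 hi
    simp [ih u hu]

lemma glIdx_take {Nf : List ℕ → ℕ} (n : ℕ) :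
    ∀ i ∈ glIdx Nf n, ∀ m ≤ n, i.take m ∈ glIdx Nf m := by
  induction n with
  | zero => intro i hi m hm; obtain rfl : m = 0 := by omega
            simp [glIdx]
  | succ n ih =>
    intro i hi m hm
    rcases Nat.lt_or_ge n m with h | h
    · obtain rfl : m = n + 1 := by omega
      rwa [List.take_of_length_le (glIdx_length _ i hi).le]
    · obtain ⟨u, hu, j, -, rfl⟩ := glIdx_succ.1 hi
      rw [List.take_append_of_le_length (by rw [glIdx_length n u hu]; exact h)]
      exact ih u hu m h

lemma glIdx_nonempty {d : ℕ} {Nf : List ℕ → ℕ}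
    (hNf : ∀ n < d, ∀ u ∈ glIdx Nf n, 1 ≤ Nf u) (n : ℕ) (hn : n ≤ d) :
    (glIdx Nf n).Nonempty := by
  induction n with
  | zero => simp [glIdx]
  | succ n ih =>
    obtain ⟨u, hu⟩ := ih (by omega)
    exact ⟨u ++ [0 + 1], glIdx_succ.2 ⟨u, hu, 0, hNf n (by omega) u hu, rfl⟩⟩

lemma glW_pos {d : ℕ} {Nf : List ℕ → ℕ} {lam : List ℕ → ℝ}
    (hlam : ∀ n, 1 ≤ n → n ≤ d → ∀ i ∈ glIdx Nf n, lam i ∈ Set.Ioo (0:ℝ) 1)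
    (s : ℕ → ℝ) {n m : ℕ} (hm : m ≤ n) (hmd : m ≤ d) (i : List ℕ) (hi : i ∈ glIdx Nf n) :
    0 < glW lam s m i := by
  refine Finset.prod_pos fun ℓ hℓ => Real.rpow_pos_of_pos ?_ _
  rw [Finset.mem_Icc] at hℓ
  exact (hlam ℓ hℓ.1 (by omega) _ (glIdx_take n i hi ℓ (by omega))).1

lemma glW_congr (lam : List ℕ → ℝ) {s s' : ℕ → ℝ} {n : ℕ} (h : ∀ m ≤ n, s m = s' m)
    (i : List ℕ) : glW lam s n i = glW lam s' n i := by
  refine Finset.prod_congr rfl fun ℓ hℓ => ?_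
  rw [Finset.mem_Icc] at hℓ
  rw [h ℓ hℓ.2, h (ℓ - 1) (by omega)]

lemma glW_sum_succ (lam : List ℕ → ℝ) (Nf : List ℕ → ℕ) (s : ℕ → ℝ) (n : ℕ) :
    ∑ i ∈ glIdx Nf (n + 1), glW lam s (n + 1) i =
      ∑ i ∈ glIdx Nf (n + 1), glW lam s n i * lam i ^ (s (n + 1) - s n) := by
  refine Finset.sum_congr rfl fun i hi => ?_
  rw [glW, Finset.prod_Icc_succ_top (by omega),
    List.take_of_length_le (glIdx_length _ i hi).le]
  rfl

lemma glW_mass {d : ℕ} {Nf : List ℕ → ℕ} {lam : List ℕ → ℝ}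
    (hNf : ∀ n < d, ∀ u ∈ glIdx Nf n, 1 ≤ Nf u)
    (hlam : ∀ n, 1 ≤ n → n ≤ d → ∀ i ∈ glIdx Nf n, lam i ∈ Set.Ioo (0:ℝ) 1)
    (s : ℕ → ℝ) {n : ℕ} (hn : n < d) :
    ∑ i ∈ glIdx Nf n, glW lam s n i ≤ ∑ i ∈ glIdx Nf (n + 1), glW lam s n i := by
  have hinj : Set.InjOn (fun u : List ℕ => u ++ [0 + 1]) (glIdx Nf n) := by
    intro u _ v _ h
    simpa using h
  have e : ∑ i ∈ glIdx Nf n, glW lam s n i =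
      ∑ i ∈ (glIdx Nf n).image (fun u => u ++ [0 + 1]), glW lam s n i := by
    rw [Finset.sum_image hinj]
    refine Finset.sum_congr rfl fun u hu => Finset.prod_congr rfl fun ℓ hℓ => ?_
    rw [Finset.mem_Icc] at hℓ
    rw [List.take_append_of_le_length (by rw [glIdx_length n u hu]; exact hℓ.2)]
  rw [e]
  refine Finset.sum_le_sum_of_subset_of_nonneg ?_ fun i hi _ =>
    (glW_pos hlam s (Nat.le_succ n) hn.le i hi).le
  intro i hi
  obtain ⟨u, hu, rfl⟩ := Finset.mem_image.1 hi
  exact glIdx_succ.2 ⟨u, hu, 0, hNf n hn u hu, rfl⟩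

lemma gl_exists {d : ℕ} {Nf : List ℕ → ℕ} {lam : List ℕ → ℝ}
    (hNf : ∀ n < d, ∀ u ∈ glIdx Nf n, 1 ≤ Nf u)
    (hlam : ∀ n, 1 ≤ n → n ≤ d → ∀ i ∈ glIdx Nf n, lam i ∈ Set.Ioo (0:ℝ) 1)
    (k : ℕ) (hk : k ≤ d) :
    ∃ s : ℕ → ℝ, s 0 = 0 ∧ (∀ n ≤ k, ∑ i ∈ glIdx Nf n, glW lam s n i = 1) ∧
      ∀ n < k, s n ≤ s (n + 1) := by
  induction k with
  | zero =>
    refine ⟨0, rfl, fun n hn => ?_, by simp⟩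
    obtain rfl : n = 0 := by omega
    simp [glIdx, glW]
  | succ k ih =>
    obtain ⟨s, h0, hs, hmono⟩ := ih (by omega)
    obtain ⟨t, ht, hsum⟩ := gl_root (glW lam s k) lam (hlam (k + 1) (by omega) hk)
      ((hs k le_rfl).symm.le.trans (glW_mass hNf hlam s hk))
    have hag : ∀ m ≤ k, Function.update s (k + 1) (s k + t) m = s m := fun m hm =>
      Function.update_of_ne (by omega) _ _
    refine ⟨Function.update s (k + 1) (s k + t), by rw [hag 0 (by omega), h0], ?_, ?_⟩
    · intro n hn
      rcases Nat.lt_or_ge k n with h | h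
      · obtain rfl : n = k + 1 := by omega
        rw [glW_sum_succ, hag k le_rfl, Function.update_self, add_sub_cancel_left, ← hsum]
        exact Finset.sum_congr rfl fun i _ => by rw [glW_congr lam hag]
      · rw [← hs n h]
        exact Finset.sum_congr rfl fun i _ => glW_congr lam (fun m hm => hag m (hm.trans h)) i
    · intro n hn
      rcases Nat.lt_or_ge n k with h | h
      · rw [hag n h.le, hag (n + 1) h]; exact hmono n h
      · obtain rfl : n = k := by omega
        rw [hag n le_rfl, Function.update_self]; linarith

/-- For any GL index structure with ratios in `(0,1)` there exist
unique reals `s_1,…,s_d` solving the pressure equations; moreover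
`0 < s_1 ≤ s_2 ≤ … ≤ s_d`. -/
theorem exists_unique_s
    (d : ℕ) (hd : 1 ≤ d)
    (Nf : List ℕ → ℕ) (hN : 2 ≤ Nf [])
    (hNf : ∀ n < d, ∀ u ∈ glIdx Nf n, 1 ≤ Nf u)
    (lam : List ℕ → ℝ)
    (hlam : ∀ n, 1 ≤ n → n ≤ d → ∀ i ∈ glIdx Nf n, lam i ∈ Set.Ioo (0:ℝ) 1) :
    ∃ s : ℕ → ℝ, s 0 = 0 ∧
      (∀ n, 1 ≤ n → n ≤ d →
        ∑ i ∈ glIdx Nf n, ∏ ℓ ∈ Finset.Icc 1 n, lam (i.take ℓ) ^ (s ℓ - s (ℓ - 1)) = 1) ∧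
      0 < s 1 ∧
      (∀ n, 1 ≤ n → n < d → s n ≤ s (n + 1)) ∧
      ∀ s' : ℕ → ℝ, s' 0 = 0 →
        (∀ n, 1 ≤ n → n ≤ d →
          ∑ i ∈ glIdx Nf n, ∏ ℓ ∈ Finset.Icc 1 n, lam (i.take ℓ) ^ (s' ℓ - s' (ℓ - 1)) = 1) →
        ∀ n, n ≤ d → s' n = s n := by
  obtain ⟨s, h0, hs, hmono⟩ := gl_exists hNf hlam d le_rfl
  refine ⟨s, h0, fun n _ hn => hs n hn, ?_, fun n _ hn => hmono n hn, ?_⟩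
  · have h01 : 0 ≤ s 1 := h0 ▸ hmono 0 hd
    refine lt_of_le_of_ne h01 fun h => ?_
    have h1 := hs 1 hd
    have hcard : (glIdx Nf 1).card = Nf [] := by
      rw [glIdx, glIdx, Finset.singleton_biUnion, Finset.card_image_of_injective,
        Finset.card_range]
      intro a b hab
      simpa using hab
    simp only [glW, Finset.Icc_self, Finset.prod_singleton, ← h, Nat.sub_self, h0, sub_self,
      Real.rpow_zero, Finset.sum_const, hcard, nsmul_eq_mul, mul_one] at h1
    have : Nf [] = 1 := by exact_mod_cast h1
    omega
  · intro s' h0' hs' n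
    induction n using Nat.strong_induction_on with
    | _ n ih =>
      intro hn
      rcases n with _ | n
      · rw [h0, h0']
      · have hag : ∀ m ≤ n, s' m = s m := fun m hm => ih m (by omega) (by omega)
        have e1 := hs (n + 1) hn
        have e2 : ∑ i ∈ glIdx Nf (n + 1), glW lam s' (n + 1) i = 1 := hs' (n + 1) (by omega) hn
        rw [glW_sum_succ] at e1 e2
        simp only [glW_congr lam hag] at e2
        have := (gl_anti (glIdx_nonempty hNf (n + 1) hn) (glW lam s n) lam
          (fun i hi => glW_pos hlam s (Nat.le_succ n) (by omega) i hi)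
          (hlam (n + 1) (by omega) hn)).injective (e2.trans e1.symm)
        linarith [hag n le_rfl]
end
end

section
/- Fix 1 ≤ n ≤ d and define p_n*(i) = λ(i^{(1)})^{s_1}·Π_{ℓ=2}^n λ(i^{(ℓ)})^{s_ℓ−s_{ℓ−1}} for i ∈ I_n, which is a probability vector on I_n by the defining equations of the s_n. Then for every probability vector p on I_n, H(p) ≤ Σ_{ℓ=1}^n (s_ℓ − s_{ℓ−1})·χ_ℓ(p), with equality if and only if p = p_n*. -/
open Real Finset Filter

noncomputable section

/-- The probability vector `p_n^*` on `I_n`. -/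
def glPstar (lam : List ℕ → ℝ) (s : ℕ → ℝ) (n : ℕ) (i : List ℕ) : ℝ :=
  ∏ ℓ ∈ Finset.Icc 1 n, lam (i.take ℓ) ^ (s ℓ - s (ℓ - 1))

theorem gl_gibbs_term {p q : ℝ} (hp : 0 ≤ p) (hq : 0 < q) :
    0 ≤ p * Real.log p - p * Real.log q + (q - p) ∧
    (p * Real.log p - p * Real.log q + (q - p) = 0 → p = q) := by
  rcases hp.eq_or_lt with h | h
  · subst h
    simp only [zero_mul, sub_zero, zero_add]
    exact ⟨hq.le, fun h => h.symm⟩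
  · have hx : 0 < q / p := div_pos hq h
    have hl : Real.log (q / p) = Real.log q - Real.log p := Real.log_div hq.ne' h.ne'
    have e : p * (q / p) = q := by field_simp
    refine ⟨?_, fun h0 => ?_⟩
    · have h1 := Real.log_le_sub_one_of_pos hx
      rw [hl] at h1
      have h2 := mul_le_mul_of_nonneg_left h1 h.le
      nlinarith
    · by_contra hne
      have hx1 : q / p ≠ 1 := by
        intro h2
        rw [h2] at e
        exact hne (by linarith)
      have h1 := Real.log_lt_sub_one_of_pos hx hx1
      rw [hl] at h1
      have h2 := mul_lt_mul_of_pos_left h1 h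
      nlinarith

theorem gl_take_mem (Nf : List ℕ → ℕ) (n : ℕ) : ∀ i ∈ glIdx Nf n,
    i.length = n ∧ ∀ l ≤ n, i.take l ∈ glIdx Nf l := by
  induction n with
  | zero =>
    intro i hi
    simp only [glIdx, Finset.mem_singleton] at hi
    subst hi
    refine ⟨rfl, fun l hl => ?_⟩
    obtain rfl : l = 0 := by omega
    simp [glIdx]
  | succ n ih =>
    intro i hi
    have hi' := hi
    simp only [glIdx, Finset.mem_biUnion, Finset.mem_image] at hi
    obtain ⟨u, hu, j, -, rfl⟩ := hi
    obtain ⟨h1, h2⟩ := ih u hu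
    have hlen : (u ++ [j + 1]).length = n + 1 := by simp [h1]
    refine ⟨hlen, fun l hl => ?_⟩
    rcases Nat.lt_or_ge n l with h | h
    · obtain rfl : l = n + 1 := by omega
      rw [List.take_of_length_le hlen.le]
      exact hi'
    · rw [List.take_append_of_le_length (by omega)]
      exact h2 l h

/-- For `1 ≤ n ≤ d` and every probability vector `p` on `I_n`,
`H(p) ≤ ∑_{ℓ=1}^n (s_ℓ - s_{ℓ-1})·χ_ℓ(p)`, with equality iff `p = p_n^*`. -/
theorem entropy_le_weighted_lyap
    (d : ℕ) (hd : 1 ≤ d)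
    (Nf : List ℕ → ℕ) (hN : 2 ≤ Nf [])
    (hNf : ∀ n < d, ∀ u ∈ glIdx Nf n, 1 ≤ Nf u)
    (lam : List ℕ → ℝ)
    (hlam : ∀ n, 1 ≤ n → n ≤ d → ∀ i ∈ glIdx Nf n, lam i ∈ Set.Ioo (0:ℝ) 1)
    (s : ℕ → ℝ) (hs0 : s 0 = 0)
    (hs : ∀ n, 1 ≤ n → n ≤ d →
      ∑ i ∈ glIdx Nf n, ∏ ℓ ∈ Finset.Icc 1 n, lam (i.take ℓ) ^ (s ℓ - s (ℓ - 1)) = 1)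
    (n : ℕ) (hn1 : 1 ≤ n) (hnd : n ≤ d)
    (p : List ℕ → ℝ) (hp : IsProbVec (glIdx Nf n) p) :
    glEnt (glIdx Nf n) p ≤
      ∑ ℓ ∈ Finset.Icc 1 n, (s ℓ - s (ℓ - 1)) * glLyap lam (glIdx Nf n) ℓ p ∧
    (glEnt (glIdx Nf n) p =
        ∑ ℓ ∈ Finset.Icc 1 n, (s ℓ - s (ℓ - 1)) * glLyap lam (glIdx Nf n) ℓ p ↔
      ∀ i ∈ glIdx Nf n, p i = glPstar lam s n i) := by
  have hpos : ∀ i ∈ glIdx Nf n, ∀ l ∈ Finset.Icc 1 n, 0 < lam (i.take l) := by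
    intro i hi l hl
    rw [Finset.mem_Icc] at hl
    exact (hlam l hl.1 (hl.2.trans hnd) _ ((gl_take_mem Nf n i hi).2 l hl.2)).1
  have hq : ∀ i ∈ glIdx Nf n, 0 < glPstar lam s n i := fun i hi =>
    Finset.prod_pos fun l hl => Real.rpow_pos_of_pos (hpos i hi l hl) _
  have hlog : ∀ i ∈ glIdx Nf n, Real.log (glPstar lam s n i) =
      ∑ l ∈ Finset.Icc 1 n, (s l - s (l - 1)) * Real.log (lam (i.take l)) := by
    intro i hi
    unfold glPstar
    rw [Real.log_prod fun l hl => (Real.rpow_pos_of_pos (hpos i hi l hl) _).ne']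
    exact Finset.sum_congr rfl fun l hl => Real.log_rpow (hpos i hi l hl) _
  have hR : ∑ ℓ ∈ Finset.Icc 1 n, (s ℓ - s (ℓ - 1)) * glLyap lam (glIdx Nf n) ℓ p =
      -∑ i ∈ glIdx Nf n, p i * Real.log (glPstar lam s n i) := by
    unfold glLyap
    simp only [mul_neg, Finset.sum_neg_distrib, Finset.mul_sum]
    rw [Finset.sum_comm]
    congr 1
    refine Finset.sum_congr rfl fun i hi => ?_
    rw [hlog i hi, Finset.mul_sum]
    exact Finset.sum_congr rfl fun l _ => by ring
  have hqs : ∑ i ∈ glIdx Nf n, glPstar lam s n i = 1 := hs n hn1 hnd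
  have key : ∑ i ∈ glIdx Nf n, (p i * Real.log (p i) - p i * Real.log (glPstar lam s n i)
      + (glPstar lam s n i - p i)) =
      -∑ i ∈ glIdx Nf n, p i * Real.log (glPstar lam s n i) - glEnt (glIdx Nf n) p := by
    rw [Finset.sum_add_distrib, Finset.sum_sub_distrib, Finset.sum_sub_distrib, hqs, hp.2, glEnt]
    ring
  have hnn := fun i hi => (gl_gibbs_term (hp.1 i hi) (hq i hi)).1
  rw [hR]
  refine ⟨?_, fun h => ?_, fun h => ?_⟩
  · have := Finset.sum_nonneg hnn
    linarith
  · rw [h, sub_self, Finset.sum_eq_zero_iff_of_nonneg hnn] at key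
    exact fun i hi => (gl_gibbs_term (hp.1 i hi) (hq i hi)).2 (key i hi)
  · rw [glEnt]
    congr 1
    exact Finset.sum_congr rfl fun i hi => by rw [h i hi]
end
end
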